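/- Let Φ : ℝ → ℝ be continuous and supported on I_B, let γ > 0, and let (T_n)_{n∈ℕ} be a sequence of positive reals with T_n B / n → γ as n → ∞. Then Σ_{k=1}^n Σ_{ℓ=1}^n (B/n)² Φ(θ_k^{(n)}) Φ(θ_ℓ^{(n)}) f_{T_n}(θ_k^{(n)} − θ_ℓ^{(n)}) → (γ + ρ(γ)) ∫_{I_B} Φ(θ)² dθ as n → ∞. -/

import Mathlib

/-!
Put `h = B / n`. Because `h f_T (h j) = f_{T h} (j)`, collecting the terms of the double sum with
the same lag `j = ℓ - k` turns it into `∑_{j ∈ ℤ} cₙ(j) f_{T_n h}(j)`, where `cₙ(j)` is `h` times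
the discrete autocorrelation of the samples of `Φ`. For each fixed `j`, `cₙ(j)` is a Riemann sum
converging to `∫ Φ²`. The `cₙ(j)` are uniformly bounded and `f_T(j) = O(1 / j²)` uniformly for `T`
near `γ`, so by dominated convergence the limit is `(∫ Φ²) ∑_{j ∈ ℤ} f_γ(j)`. The remaining series
is `γ + ρ(γ)` by the Fourier expansion of the second Bernoulli polynomial, which is where the
fractional part of `γ` comes from.
-/

open MeasureTheory Real Filter Topology

/-- The continuous-time Fejér kernel. -/
noncomputable def fejer (T θ : ℝ) : ℝ :=
  if θ = 0 then T
  else 2 * (1 - Real.cos (2 * Real.pi * θ * T)) / ((2 * Real.pi) ^ 2 * θ ^ 2 * T)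

/-- `ρ(γ) = γ̆(1 − γ̆)/γ`, where `γ̆` is the fractional part of `γ`. -/
noncomputable def rho (γ : ℝ) : ℝ := Int.fract γ * (1 - Int.fract γ) / γ

/-- The uniform grid point `θ_k^{(n)} = θ_c + B(k − 1 − n/2)/n`, `k = 1, …, n`
(here `k : Fin n` corresponds to the paper's index `k + 1`). -/
noncomputable def gridPoint (θc B : ℝ) (n : ℕ) (k : Fin n) : ℝ :=
  θc + B * (((k : ℕ) : ℝ) + 1 - 1 - (n : ℝ) / 2) / n

section FejerKernel

lemma fejer_eq_mul_sinc_sq (T θ : ℝ) : fejer T θ = T * sinc (π * θ * T) ^ 2 := by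
  rcases eq_or_ne θ 0 with rfl | hθ
  · simp [fejer]
  rcases eq_or_ne T 0 with rfl | hT
  · simp [fejer]
  rw [fejer, if_neg hθ, sinc_of_ne_zero (by positivity), div_pow, sin_sq_eq_half_sub,
    show 2 * (π * θ * T) = 2 * π * θ * T by ring]
  field_simp

lemma fejer_neg (T θ : ℝ) : fejer T (-θ) = fejer T θ := by
  simp only [fejer_eq_mul_sinc_sq, mul_neg, neg_mul, sinc_neg]

lemma mul_fejer_mul (h T θ : ℝ) : h * fejer T (h * θ) = fejer (T * h) θ := by
  rw [fejer_eq_mul_sinc_sq, fejer_eq_mul_sinc_sq,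
    show π * (h * θ) * T = π * θ * (T * h) by ring]
  ring

lemma continuous_fejer_left (θ : ℝ) : Continuous fun T => fejer T θ := by
  simp only [fejer_eq_mul_sinc_sq]
  fun_prop

/-- The second summand vanishes at `j = 0` because `x / 0 = 0`. -/
lemma fejer_intCast (T : ℝ) (j : ℤ) :
    fejer T j = (if j = 0 then T else 0) +
      (2 * π ^ 2 * T)⁻¹ * ((1 - cos (2 * π * j * T)) / (j : ℝ) ^ 2) := by
  rcases eq_or_ne j 0 with rfl | hj
  · simp [fejer]
  · rw [fejer, if_neg (Int.cast_ne_zero.mpr hj), if_neg hj]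
    field_simp
    ring

lemma abs_fejer_intCast_le (T : ℝ) (j : ℤ) :
    |fejer T j| ≤ (if j = 0 then |T| else 0) + (π ^ 2 * |T|)⁻¹ * (1 / (j : ℝ) ^ 2) := by
  have hcos : |1 - cos (2 * π * j * T)| ≤ 2 := by
    rw [abs_le]
    constructor <;> linarith [cos_le_one (2 * π * j * T), neg_one_le_cos (2 * π * j * T)]
  calc |fejer T j|
      ≤ |if j = 0 then T else 0| +
          (2 * π ^ 2 * |T|)⁻¹ * (|1 - cos (2 * π * j * T)| / (j : ℝ) ^ 2) := by
        rw [fejer_intCast]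
        refine (abs_add_le _ _).trans_eq ?_
        simp [abs_mul, abs_div]
    _ ≤ (if j = 0 then |T| else 0) + (2 * π ^ 2 * |T|)⁻¹ * (2 / (j : ℝ) ^ 2) := by
        rw [apply_ite abs, abs_zero]
        gcongr
    _ = (if j = 0 then |T| else 0) + (π ^ 2 * |T|)⁻¹ * (1 / (j : ℝ) ^ 2) := by
        ring

lemma exists_summable_eventually_abs_fejer_le {γ : ℝ} (hγ : γ ≠ 0) :
    ∃ b : ℤ → ℝ, Summable b ∧ ∀ᶠ T in 𝓝 γ, ∀ j : ℤ, |fejer T j| ≤ b j := by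
  have hγ' : 0 < |γ| := abs_pos.mpr hγ
  refine ⟨fun j => (if j = 0 then 2 * |γ| else 0) + (π ^ 2 * (|γ| / 2))⁻¹ * (1 / (j : ℝ) ^ 2),
    (hasSum_ite_eq 0 _).summable.add
      ((Real.summable_one_div_int_pow.mpr one_lt_two).mul_left _), ?_⟩
  have habs : Tendsto (fun T : ℝ => |T|) (𝓝 γ) (𝓝 |γ|) := continuous_abs.tendsto γ
  filter_upwards [habs.eventually_const_le (half_lt_self hγ'),
    habs.eventually_le_const (show |γ| < 2 * |γ| by linarith)] with T hT₁ hT₂ j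
  refine (abs_fejer_intCast_le T j).trans ?_
  gcongr
  split_ifs <;> simp [hT₂]

lemma hasSum_one_sub_cos_div_sq (x : ℝ) :
    HasSum (fun n : ℕ => (1 - cos (2 * π * n * x)) / (n : ℝ) ^ 2)
      (π ^ 2 * (Int.fract x * (1 - Int.fract x))) := by
  have hcos : HasSum (fun n : ℕ => 1 / (n : ℝ) ^ (2 * 1) * cos (2 * π * n * Int.fract x))
      (π ^ 2 * bernoulliFun 2 (Int.fract x)) := by
    convert! hasSum_one_div_nat_pow_mul_cos one_ne_zero
      ⟨Int.fract_nonneg x, (Int.fract_lt_one x).le⟩ using 1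
    simp only [bernoulliFun, Nat.factorial]
    push_cast
    ring
  have hperiod (n : ℕ) : cos (2 * π * n * Int.fract x) = cos (2 * π * n * x) := by
    rw [← cos_sub_int_mul_two_pi (2 * π * n * x) (n * ⌊x⌋), ← Int.self_sub_floor]
    push_cast
    ring_nf
  convert! hasSum_zeta_two.sub hcos using 1
  · funext n
    rw [hperiod]
    ring
  · rw [bernoulliFun_two]
    ring

lemma hasSum_fejer_intCast {γ : ℝ} (hγ : γ ≠ 0) :
    HasSum (fun j : ℤ => fejer γ j) (γ + rho γ) := by
  have hsum_nat := hasSum_one_sub_cos_div_sq γ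
  have hsum_int : HasSum (fun j : ℤ => (1 - cos (2 * π * j * γ)) / (j : ℝ) ^ 2)
      (2 * π ^ 2 * (Int.fract γ * (1 - Int.fract γ))) := by
    convert! HasSum.of_nat_of_neg (f := fun j : ℤ => (1 - cos (2 * π * j * γ)) / (j : ℝ) ^ 2)
      (by simpa using hsum_nat) (by simpa using hsum_nat) using 1
    simp only [Int.cast_zero, mul_zero, zero_mul, cos_zero, sub_self, zero_div, sub_zero]
    ring
  simp only [fejer_intCast]
  convert! (hasSum_ite_eq (0 : ℤ) γ).add (hsum_int.mul_left (2 * π ^ 2 * γ)⁻¹) using 2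
  rw [rho]
  field_simp

lemma tendsto_tsum_mul_fejer {ι : Type*} {l : Filter ι} {c : ι → ℤ → ℝ} {C L γ : ℝ} {T : ι → ℝ}
    (hC : ∀ᶠ i in l, ∀ j, |c i j| ≤ C) (hc : ∀ j, Tendsto (fun i => c i j) l (𝓝 L))
    (hγ : γ ≠ 0) (hT : Tendsto T l (𝓝 γ)) :
    Tendsto (fun i => ∑' j : ℤ, c i j * fejer (T i) j) l (𝓝 ((γ + rho γ) * L)) := by
  obtain ⟨b, hb, hfejer⟩ := exists_summable_eventually_abs_fejer_le hγ
  rw [mul_comm, ← (hasSum_fejer_intCast hγ).tsum_eq, ← tsum_mul_left]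
  refine tendsto_tsum_of_dominated_convergence (hb.mul_left C)
    (fun j => (hc j).mul (((continuous_fejer_left j).tendsto γ).comp hT)) ?_
  filter_upwards [hC, hT.eventually hfejer] with i hCi hbi j
  rw [norm_mul]
  exact mul_le_mul (hCi j) (hbi j) (norm_nonneg _) ((abs_nonneg _).trans (hCi j))

end FejerKernel

section RiemannSum

variable {E : Type*} [NormedAddCommGroup E] [NormedSpace ℝ E] [CompleteSpace E]

lemma integral_comp_natFloor (f : ℕ → E) (n : ℕ) :
    ∫ t in (0 : ℝ)..n, f ⌊t⌋₊ = ∑ k ∈ Finset.range n, f k := by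
  have heq (k : ℕ) :
      Set.EqOn (fun _ => f k) (fun t : ℝ => f ⌊t⌋₊) (Set.uIoo (k : ℝ) (k + 1 : ℕ)) := by
    intro t ht
    beta_reduce
    rw [Set.uIoo_of_le (by simp), Set.mem_Ioo, Nat.cast_succ] at ht
    rw [(Nat.floor_eq_iff (by linarith [ht.1, k.cast_nonneg (α := ℝ)])).mpr ⟨ht.1.le, ht.2⟩]
  rw [← Nat.cast_zero, ← intervalIntegral.sum_integral_adjacent_intervals (a := Nat.cast)
    fun k _ => intervalIntegrable_const.congr_uIoo (heq k)]
  refine Finset.sum_congr rfl fun k _ => ?_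
  rw [← intervalIntegral.integral_congr_uIoo (heq k)]
  simp

lemma integral_comp_natFloor_div (f : ℕ → E) (a : ℝ) {h : ℝ} (hh : h ≠ 0) (n : ℕ) :
    ∫ x in a..(a + n * h), f ⌊(x - a) / h⌋₊ = h • ∑ k ∈ Finset.range n, f k := by
  have hsubst := intervalIntegral.integral_comp_div_sub (a := a) (b := a + n * h)
    (fun t : ℝ => f ⌊t⌋₊) hh (a / h)
  rw [sub_self, ← sub_div, add_sub_cancel_left, mul_div_cancel_right₀ _ hh,
    integral_comp_natFloor] at hsubst
  simpa only [sub_div] using hsubst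

lemma tendsto_riemannSum_of_bounded {F : ℕ → ℕ → E} {f : ℝ → E} {a B C : ℝ}
    (hB : 0 < B) (hC : ∀ n, ∀ k < n, ‖F n k‖ ≤ C)
    (hf : ∀ᵐ x ∂volume.restrict (Set.Ioo a (a + B)),
      Tendsto (fun n : ℕ => F n ⌊(x - a) / (B / n)⌋₊) atTop (𝓝 (f x))) :
    Tendsto (fun n : ℕ => (B / n) • ∑ k ∈ Finset.range n, F n k) atTop
      (𝓝 (∫ x in Set.Ioo a (a + B), f x)) := by
  have hsum : ∀ᶠ n : ℕ in atTop, ∫ x in Set.Ioo a (a + B), F n ⌊(x - a) / (B / n)⌋₊ =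
      (B / n) • ∑ k ∈ Finset.range n, F n k := by
    filter_upwards [eventually_ne_atTop 0] with n hn
    rw [← integral_comp_natFloor_div (F n) a (by positivity : B / n ≠ 0),
      mul_div_cancel₀ _ (by positivity), intervalIntegral.integral_of_le (by linarith),
      integral_Ioc_eq_integral_Ioo]
  refine Tendsto.congr' hsum <|
    tendsto_integral_filter_of_dominated_convergence (fun _ => C) ?_ ?_ (integrable_const C) hf
  · exact .of_forall fun n =>
      (StronglyMeasurable.of_discrete.comp_measurable (by fun_prop)).aestronglyMeasurable
  · filter_upwards [eventually_ne_atTop 0] with n hn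
    refine ae_restrict_of_forall_mem measurableSet_Ioo fun x hx => hC n _ ?_
    rw [Nat.floor_lt (div_nonneg (by linarith [hx.1]) (by positivity)), div_lt_iff₀ (by positivity),
      mul_div_cancel₀ _ (by positivity)]
    linarith [hx.2]

end RiemannSum

lemma hasSum_sum_mul_comp_sub {ι G R : Type*} [Fintype ι] [AddCommGroup G]
    [NonUnitalSemiring R] [TopologicalSpace R] [ContinuousAdd R] {e : ι → G}
    (he : Function.Injective e) (u : ι → R) {v : G → R} (hv : ∀ g ∉ Set.range e, v g = 0)
    (K : G → R) :
    HasSum (fun g => (∑ k, u k * v (e k + g)) * K g) (∑ k, ∑ l, u k * v (e l) * K (e l - e k)) := by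
  simp only [Finset.sum_mul]
  refine hasSum_sum fun k _ => ?_
  have hinj : Function.Injective fun l => e l - e k := fun l m h => he (sub_left_injective h)
  refine (hinj.hasSum_iff fun g hg => ?_).mp ?_
  · rw [hv, mul_zero, zero_mul]
    rintro ⟨l, hl⟩
    exact hg ⟨l, by simp [hl]⟩
  · simpa [Function.comp_def] using hasSum_fintype fun l => u k * v (e l) * K (e l - e k)

section CrossCorrelation

/-- The lattice point `a + k B / n`; for `0 ≤ k < n` these are the left endpoints of the `n` equal
parts of `[a, a + B]`. -/
noncomputable def latticePoint (a B : ℝ) (n : ℕ) (k : ℤ) : ℝ := a + k * (B / n)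

/-- The cross-correlation at lag `j` of the samples of `Φ` and `Ψ` at the `n` lattice points of
`[a, a + B)`. The indicator discards the indices `k + j` outside `{0, …, n - 1}`, and the factor
`B / n` makes the correlation a Riemann sum. -/
noncomputable def crossCorrelation (Φ Ψ : ℝ → ℝ) (a B : ℝ) (n : ℕ) (j : ℤ) : ℝ :=
  B / n * ∑ k ∈ Finset.range n,
    Φ (latticePoint a B n k) * (Set.Ico a (a + B)).indicator Ψ (latticePoint a B n (k + j))

variable {Φ Ψ : ℝ → ℝ} {a B C D : ℝ} {n : ℕ}

lemma gridPoint_eq_latticePoint (θc B : ℝ) (k : Fin n) :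
    gridPoint θc B n k = latticePoint (θc - B / 2) B n (k : ℕ) := by
  have hn : (n : ℝ) ≠ 0 := Nat.cast_ne_zero.mpr k.pos.ne'
  simp only [gridPoint, latticePoint, Int.cast_natCast]
  field_simp
  ring

lemma latticePoint_mem_Ico_iff (hB : 0 < B) (hn : n ≠ 0) {k : ℤ} :
    latticePoint a B n k ∈ Set.Ico a (a + B) ↔ k ∈ Set.Ico 0 (n : ℤ) := by
  have hh : 0 < B / n := by positivity
  have hright : a + B = latticePoint a B n n := by
    simp only [latticePoint, Int.cast_natCast]
    field_simp
  rw [Set.mem_Ico, Set.mem_Ico, hright]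
  simp only [latticePoint, le_add_iff_nonneg_right, add_lt_add_iff_left,
    mul_lt_mul_iff_left₀ hh, mul_nonneg_iff_of_pos_right hh]
  norm_cast

lemma tendsto_latticePoint_floor (hB : 0 < B) {x : ℝ} (hx : a ≤ x) (j : ℤ) :
    Tendsto (fun n : ℕ => latticePoint a B n (⌊(x - a) / (B / n)⌋₊ + j)) atTop (𝓝 x) := by
  have hfloor : Tendsto (fun n : ℕ => (⌊(x - a) / B * n⌋₊ / n : ℝ)) atTop (𝓝 ((x - a) / B)) :=
    (tendsto_nat_floor_mul_div_atTop (div_nonneg (sub_nonneg.mpr hx) hB.le)).comp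
      tendsto_natCast_atTop_atTop
  have hlag : Tendsto (fun n : ℕ => (j / n : ℝ)) atTop (𝓝 0) :=
    tendsto_const_div_atTop_nhds_zero_nat _
  convert ((hfloor.add hlag).mul_const B).const_add a using 2 with n
  · simp only [latticePoint, div_div_eq_mul_div, div_mul_eq_mul_div, Int.cast_add, Int.cast_natCast]
    ring
  · field_simp
    ring

lemma abs_mul_indicator_latticePoint_le (hB : 0 < B) (hΦ : ∀ x ∈ Set.Ico a (a + B), |Φ x| ≤ C)
    (hΨ : ∀ x ∈ Set.Ico a (a + B), |Ψ x| ≤ D) {k : ℕ} (hk : k < n) (j : ℤ) :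
    |Φ (latticePoint a B n k) * (Set.Ico a (a + B)).indicator Ψ (latticePoint a B n (k + j))| ≤
      C * D := by
  have ha : a ∈ Set.Ico a (a + B) := by simpa using hB
  have hC : 0 ≤ C := (abs_nonneg _).trans (hΦ a ha)
  have hD : 0 ≤ D := (abs_nonneg _).trans (hΨ a ha)
  rw [abs_mul]
  gcongr
  · exact hΦ _ ((latticePoint_mem_Ico_iff hB (by omega)).mpr (by simpa using hk))
  · rw [Set.indicator_apply]
    split_ifs with hmem
    · exact hΨ _ hmem
    · simpa using hD

lemma abs_crossCorrelation_le (hB : 0 < B) (hΦ : ∀ x ∈ Set.Ico a (a + B), |Φ x| ≤ C)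
    (hΨ : ∀ x ∈ Set.Ico a (a + B), |Ψ x| ≤ D) (hn : n ≠ 0) (j : ℤ) :
    |crossCorrelation Φ Ψ a B n j| ≤ B * (C * D) := by
  calc |crossCorrelation Φ Ψ a B n j|
      ≤ B / n * ∑ _k ∈ Finset.range n, C * D := by
        rw [crossCorrelation, abs_mul, abs_of_pos (by positivity)]
        gcongr
        exact (Finset.abs_sum_le_sum_abs _ _).trans <| Finset.sum_le_sum fun k hk =>
          abs_mul_indicator_latticePoint_le hB hΦ hΨ (Finset.mem_range.mp hk) j
    _ = B * (C * D) := by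
        rw [Finset.sum_const, Finset.card_range, nsmul_eq_mul, ← mul_assoc,
          div_mul_cancel₀ _ (by positivity)]

lemma tendsto_crossCorrelation (hB : 0 < B) (hΦ : ∀ x ∈ Set.Ico a (a + B), |Φ x| ≤ C)
    (hΨ : ∀ x ∈ Set.Ico a (a + B), |Ψ x| ≤ D)
    (hΦc : ∀ᵐ x ∂volume.restrict (Set.Ioo a (a + B)), ContinuousAt Φ x)
    (hΨc : ∀ᵐ x ∂volume.restrict (Set.Ioo a (a + B)), ContinuousAt Ψ x) (j : ℤ) :
    Tendsto (fun n => crossCorrelation Φ Ψ a B n j) atTop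
      (𝓝 (∫ x in Set.Ioo a (a + B), Φ x * Ψ x)) := by
  refine tendsto_riemannSum_of_bounded hB
    (fun n k hk => abs_mul_indicator_latticePoint_le hB hΦ hΨ hk j) ?_
  filter_upwards [hΦc, hΨc, ae_restrict_mem measurableSet_Ioo] with x hΦx hΨx hx
  have hlattice := tendsto_latticePoint_floor hB hx.1.le
  have hindicator : (Set.Ico a (a + B)).indicator Ψ =ᶠ[𝓝 x] Ψ :=
    (Set.eqOn_indicator.mono Set.Ioo_subset_Ico_self).eventuallyEq_of_mem (Ioo_mem_nhds hx.1 hx.2)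
  exact (hΦx.tendsto.comp (by simpa using hlattice 0)).mul
    ((hΨx.tendsto.congr' hindicator.symm).comp (hlattice j))

lemma hasSum_crossCorrelation_mul_fejer (hB : 0 < B) (hn : n ≠ 0) (Φ Ψ : ℝ → ℝ) (θc T : ℝ) :
    HasSum (fun j : ℤ => crossCorrelation Φ Ψ (θc - B / 2) B n j * fejer (T * B / n) j)
      (∑ k : Fin n, ∑ l : Fin n,
        (B / n) ^ 2 * Φ (gridPoint θc B n k) * Ψ (gridPoint θc B n l) *
          fejer T (gridPoint θc B n k - gridPoint θc B n l)) := by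
  set p := latticePoint (θc - B / 2) B n with hp
  set I := Set.Ico (θc - B / 2) (θc - B / 2 + B)
  have hmem (m : ℤ) : p m ∈ I ↔ m ∈ Set.Ico 0 (n : ℤ) := latticePoint_mem_Ico_iff hB hn
  have hinj : Function.Injective fun k : Fin n => ((k : ℕ) : ℤ) :=
    Nat.cast_injective.comp Fin.val_injective
  have hzero : ∀ m ∉ Set.range fun k : Fin n => ((k : ℕ) : ℤ), I.indicator Ψ (p m) = 0 := by
    refine fun m hm => Set.indicator_of_notMem (fun hpm => hm ?_) Ψ
    obtain ⟨hm₀, hmn⟩ := (hmem m).mp hpm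
    exact ⟨⟨m.toNat, by omega⟩, by simpa using hm₀⟩
  convert! (hasSum_sum_mul_comp_sub hinj (fun k => Φ (p (k : ℕ))) hzero
    fun j => fejer (T * B / n) j).mul_left (B / n) using 1
  · funext j
    rw [crossCorrelation, Finset.sum_range, mul_assoc]
  · simp only [Finset.mul_sum, gridPoint_eq_latticePoint, ← hp]
    refine Finset.sum_congr rfl fun k _ => Finset.sum_congr rfl fun l _ => ?_
    have hdiff : p (k : ℕ) - p (l : ℕ) = -(B / n * (((l : ℕ) - (k : ℕ) : ℤ) : ℝ)) := by
      simp only [hp, latticePoint]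
      push_cast
      ring
    rw [Set.indicator_of_mem ((hmem l).mpr (by simp)), hdiff, fejer_neg, mul_div_assoc,
      ← mul_fejer_mul]
    ring

end CrossCorrelation

/-- `Φ` and `Ψ` are Riemann integrable on `I_B`, in the form given by Lebesgue's criterion. -/
theorem double_fejer_sum_limit_general {θc B C D γ : ℝ} (hB : 0 < B) {Φ Ψ : ℝ → ℝ}
    (hΦ : ∀ θ ∈ Set.Icc (θc - B / 2) (θc + B / 2), |Φ θ| ≤ C)
    (hΨ : ∀ θ ∈ Set.Icc (θc - B / 2) (θc + B / 2), |Ψ θ| ≤ D)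
    (hΦc : ∀ᵐ θ ∂volume.restrict (Set.Ioo (θc - B / 2) (θc + B / 2)), ContinuousAt Φ θ)
    (hΨc : ∀ᵐ θ ∂volume.restrict (Set.Ioo (θc - B / 2) (θc + B / 2)), ContinuousAt Ψ θ)
    (hγ : γ ≠ 0) {T : ℕ → ℝ} (hTγ : Tendsto (fun n : ℕ => T n * B / n) atTop (𝓝 γ)) :
    Tendsto (fun n : ℕ =>
        ∑ k : Fin n, ∑ l : Fin n,
          (B / n) ^ 2 * Φ (gridPoint θc B n k) * Ψ (gridPoint θc B n l) *
            fejer (T n) (gridPoint θc B n k - gridPoint θc B n l))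
      atTop
      (𝓝 ((γ + rho γ) * ∫ θ in Set.Icc (θc - B / 2) (θc + B / 2), Φ θ * Ψ θ)) := by
  have hright : θc + B / 2 = θc - B / 2 + B := by ring
  rw [hright] at hΦ hΨ hΦc hΨc ⊢
  replace hΦ := fun θ hθ => hΦ θ (Set.Ico_subset_Icc_self hθ)
  replace hΨ := fun θ hθ => hΨ θ (Set.Ico_subset_Icc_self hθ)
  rw [integral_Icc_eq_integral_Ioo]
  refine (tendsto_tsum_mul_fejer
    ((eventually_ne_atTop 0).mono fun n hn j => abs_crossCorrelation_le hB hΦ hΨ hn j)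
    (tendsto_crossCorrelation hB hΦ hΨ hΦc hΨc) hγ hTγ).congr' ?_
  filter_upwards [eventually_ne_atTop 0] with n hn
  exact (hasSum_crossCorrelation_mul_fejer hB hn Φ Ψ θc (T n)).tsum_eq

/-- convergence of the discretized double Fejér sum to
`(γ + ρ(γ)) ∫_{I_B} Φ(θ)² dθ` when `T_n B / n → γ`. -/
theorem double_fejer_sum_limit
    (θc B : ℝ) (hB : 0 < B) (Φ : ℝ → ℝ)
    (hΦc : Continuous Φ) (hΦ0 : ∀ θ, 0 ≤ Φ θ)
    (hsupp : Function.support Φ ⊆ Set.Icc (θc - B / 2) (θc + B / 2))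
    (γ : ℝ) (hγ : 0 < γ) (T : ℕ → ℝ) (hT : ∀ n, 0 < T n)
    (hTγ : Tendsto (fun n : ℕ => T n * B / n) atTop (𝓝 γ)) :
    Tendsto (fun n : ℕ =>
        ∑ k : Fin n, ∑ l : Fin n,
          (B / n) ^ 2 * Φ (gridPoint θc B n k) * Φ (gridPoint θc B n l) *
            fejer (T n) (gridPoint θc B n k - gridPoint θc B n l))
      atTop
      (𝓝 ((γ + rho γ) * ∫ θ in Set.Icc (θc - B / 2) (θc + B / 2), (Φ θ) ^ 2)) := by
  obtain ⟨C, hC⟩ := isCompact_Icc.exists_bound_of_continuousOn hΦc.continuousOn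
  simpa only [← sq] using double_fejer_sum_limit_general hB hC hC
    (ae_of_all _ fun _ => hΦc.continuousAt) (ae_of_all _ fun _ => hΦc.continuousAt) hγ.ne' hTγ
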